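/- arXiv:2604.04041 — 4 statements merged into one kernel-verified Lean document; each statement's English description precedes it below -/
import Mathlib

section
/- If R ∈ SO(3) satisfies sk(R) = 0 (i.e., R is symmetric) and φ(R) < 2, then R = I₃. In other words, the identity is the only symmetric rotation matrix whose attitude error φ is strictly less than 2. -/
noncomputable section
open Matrix

abbrev M3 : Type := Matrix (Fin 3) (Fin 3) ℝ

/-- `SO(3)`: real 3×3 matrices with `RᵀR = I` and `det R = 1`. -/
def SO3 (R : M3) : Prop := Rᵀ * R = 1 ∧ R.det = 1

/-- Attitude error function `φ(R) = (1/2)·tr(I₃ − R)`. -/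
def phi (R : M3) : ℝ := (1 / 2) * ((1 : M3) - R).trace

/-- Skew-symmetric projection `sk(A) = (A − Aᵀ)/2`. -/
def sk (A : M3) : M3 := (1 / 2 : ℝ) • (A - Aᵀ)

/-!
A symmetric rotation `R` is an involution, so `P = (I − R)/2` is idempotent and `R = I − 2P`. Hence
`φ(R) = tr P = rank P` is a natural number and `det R = (−1) ^ rank P`. As `det R = 1`, the rank is
even; being less than `2` it vanishes, and so `P = 0`.
-/

section Projection

variable {R M : Type*} [CommRing R] [AddCommGroup M] [Module R M]

theorem det_one_add_smul_of_isProj {p : Submodule R M} {f : Module.End R M}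
    (hf : LinearMap.IsProj p f) [Module.Free R p] [Module.Finite R p]
    [Module.Free R f.ker] [Module.Finite R f.ker] (c : R) :
    LinearMap.det (1 + c • f) = (1 + c) ^ Module.finrank R p := by
  let e := p.prodEquivOfIsCompl f.ker hf.isCompl
  have hblock : 1 + c • f = e.conj (((1 + c) • LinearMap.id).prodMap LinearMap.id) := by
    have hsplit : ((1 + c) • LinearMap.id).prodMap LinearMap.id
        = (LinearMap.id : Module.End R (p × f.ker)) + c • LinearMap.prodMap LinearMap.id 0 := by
      ext <;> simp [add_smul]
    rw [hsplit, map_add, map_smul, LinearEquiv.conj_id, ← hf.eq_conj_prodMap, Module.End.one_eq_id]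
  rw [hblock, LinearEquiv.conj_apply, LinearMap.comp_assoc, LinearMap.det_conj,
    LinearMap.det_prodMap, LinearMap.det_smul, LinearMap.det_id, LinearMap.det_id, mul_one, mul_one]

end Projection

theorem isIdempotentElem_inv_two_smul_one_sub {K A : Type*} [Field K] [NeZero (2 : K)] [Ring A]
    [Algebra K A] {a : A} (ha : a * a = 1) : IsIdempotentElem ((2⁻¹ : K) • (1 - a)) := by
  have hsq : (1 - a) * (1 - a) = (2 : K) • (1 - a) := by
    rw [two_smul, mul_sub, mul_one, sub_mul, one_mul, ha]
    abel
  rw [IsIdempotentElem, smul_mul_smul_comm, hsq, smul_smul, mul_assoc,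
    inv_mul_cancel₀ two_ne_zero, mul_one]

section Matrix

variable {n K : Type*} [Fintype n] [Field K]

theorem matrix_rank_eq_zero_iff {m : Type*} [Finite m] {A : Matrix m n K} :
    A.rank = 0 ↔ A = 0 := by
  classical
  rw [rank, Submodule.finrank_eq_zero, LinearMap.range_eq_bot, ← toLin'_apply',
    LinearEquiv.map_eq_zero_iff]

theorem matrix_rank_smul_of_ne_zero {m : Type*} {c : K} (hc : c ≠ 0) (A : Matrix m n K) :
    (c • A).rank = A.rank :=
  rank_smul_of_mem_nonZeroDivisors A (mem_nonZeroDivisors_of_ne_zero hc)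

variable {P R : Matrix n n K}

theorem isProj_toLin'_of_isIdempotentElem [DecidableEq n] (hP : IsIdempotentElem P) :
    LinearMap.IsProj (toLin' P).range (toLin' P) :=
  LinearMap.IsIdempotentElem.isProj_range _ (hP.map toLinAlgEquiv')

theorem trace_eq_rank_of_isIdempotentElem (hP : IsIdempotentElem P) : P.trace = P.rank := by
  classical
  rw [← trace_toLin'_eq, (isProj_toLin'_of_isIdempotentElem hP).trace, rank, toLin'_apply']

variable [DecidableEq n]

theorem det_one_add_smul_of_isIdempotentElem (hP : IsIdempotentElem P) (c : K) :
    (1 + c • P).det = (1 + c) ^ P.rank := by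
  rw [← LinearMap.det_toLin', map_add, map_smul, toLin'_one]
  exact det_one_add_smul_of_isProj (isProj_toLin'_of_isIdempotentElem hP) c

variable [NeZero (2 : K)]

theorem half_trace_one_sub_eq_rank_of_mul_self_eq_one (hR : R * R = 1) :
    1 / 2 * (1 - R).trace = (1 - R).rank := by
  rw [one_div, ← smul_eq_mul, ← trace_smul,
    trace_eq_rank_of_isIdempotentElem (isIdempotentElem_inv_two_smul_one_sub hR),
    matrix_rank_smul_of_ne_zero (inv_ne_zero two_ne_zero)]

theorem det_eq_neg_one_pow_rank_of_mul_self_eq_one (hR : R * R = 1) :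
    R.det = (-1) ^ (1 - R).rank := by
  have hdecomp : R = 1 + (-2 : K) • (2⁻¹ : K) • (1 - R) := by
    rw [smul_smul, neg_mul, mul_inv_cancel₀ two_ne_zero, neg_one_smul]
    abel
  calc R.det = (1 + (-2 : K) • (2⁻¹ : K) • (1 - R)).det := by rw [← hdecomp]
    _ = (1 + -2) ^ ((2⁻¹ : K) • (1 - R)).rank :=
      det_one_add_smul_of_isIdempotentElem (isIdempotentElem_inv_two_smul_one_sub hR) _
    _ = (-1) ^ (1 - R).rank := by
      rw [matrix_rank_smul_of_ne_zero (inv_ne_zero two_ne_zero)]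
      norm_num

end Matrix

theorem symm_rotation_phi_lt_two_eq_id_general {n K : Type*} [Fintype n] [DecidableEq n]
    [Field K] [LinearOrder K] [IsStrictOrderedRing K] {R : Matrix n n K} (hR : R * R = 1)
    (hdet : R.det = 1) (hphi : 1 / 2 * (1 - R).trace < 2) : R = 1 := by
  have hlt : (1 - R).rank < 2 := by
    rw [half_trace_one_sub_eq_rank_of_mul_self_eq_one hR] at hphi
    exact_mod_cast hphi
  have heven : Even (1 - R).rank := by
    rw [det_eq_neg_one_pow_rank_of_mul_self_eq_one hR] at hdet
    exact (neg_one_pow_eq_one_iff_even (by norm_num)).mp hdet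
  have hzero : (1 - R).rank = 0 := Nat.eq_zero_of_dvd_of_lt heven.two_dvd hlt
  exact (sub_eq_zero.mp (matrix_rank_eq_zero_iff.mp hzero)).symm

theorem sk_eq_zero_iff_isSymm {A : M3} : sk A = 0 ↔ A.IsSymm := by
  rw [sk, smul_eq_zero_iff_right (by norm_num), sub_eq_zero, eq_comm, IsSymm]

theorem mul_self_eq_one_of_SO3_of_sk_eq_zero {R : M3} (hR : SO3 R) (hsk : sk R = 0) :
    R * R = 1 := by
  simpa only [(sk_eq_zero_iff_isSymm.mp hsk).eq] using hR.1

/-- The identity is the only symmetric rotation matrix whose attitude error `φ`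
is strictly less than `2`. -/
theorem symm_rotation_phi_lt_two_eq_id (R : M3) (hR : SO3 R)
    (hsk : sk R = 0) (hphi : phi R < 2) : R = 1 :=
  symm_rotation_phi_lt_two_eq_id_general (mul_self_eq_one_of_SO3_of_sk_eq_zero hR hsk)
    hR.2 hphi
end
end

section
/- Let I ⊆ ℝ be an interval and let R, R_g : I → SO(3) be differentiable curves such that Ṙ(t) = R(t)·ω̂(t) for some ω : I → ℝ³. Set R_e(t) := R(t)ᵀR_g(t). Then for all t ∈ I, (d/dt) φ(R_e(t)) = −ω(t)ᵀ·sk(R_e(t))∨ − (1/2)·tr(R(t)ᵀ·Ṙ_g(t)). -/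
noncomputable section
open Matrix

abbrev V3 : Type := Fin 3 → ℝ

/-- Hat map: `x̂ y = x × y`. -/
def hat (x : V3) : M3 := !![0, -x 2, x 1; x 2, 0, -x 0; -x 1, x 0, 0]

/-- Vee map: the vector associated with a skew-symmetric matrix. -/
def vee (S : M3) : V3 := ![S 2 1, S 0 2, S 1 0]

/-- Dot product on ℝ³. -/
def dotp (v w : V3) : ℝ := ∑ i, v i * w i

/-!
By the product rule `(RᵀR_g)˙ = (Rω̂)ᵀR_g + RᵀṘ_g = -ω̂R_e + RᵀṘ_g`, and `φ` is affine with linear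
part `-(1/2)·tr`. The trace of a skew-symmetric matrix times `R_e` depends only on `sk(R_e)`, so
`tr(ω̂R_e) = tr(ω̂ (sk(R_e)∨)^)`, and on skew-symmetric matrices the trace form is `-2` times the
dot product of the associated vectors.
-/

theorem trace_mul_transpose_of_transpose_eq_neg {n α : Type*} [Fintype n] [NonUnitalCommRing α]
    {S : Matrix n n α} (hS : Sᵀ = -S) (A : Matrix n n α) :
    (S * Aᵀ).trace = -(S * A).trace := by
  calc (S * Aᵀ).trace = (Sᵀ * A).trace := by
        rw [← trace_transpose, transpose_mul, transpose_transpose, trace_mul_comm]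
    _ = -(S * A).trace := by rw [hS, Matrix.neg_mul, trace_neg]

theorem trace_mul_sk {S : M3} (hS : Sᵀ = -S) (A : M3) : (S * sk A).trace = (S * A).trace := by
  rw [sk, Matrix.mul_smul, Matrix.mul_sub, trace_smul, trace_sub,
    trace_mul_transpose_of_transpose_eq_neg hS, smul_eq_mul]
  ring

theorem transpose_sk (A : M3) : (sk A)ᵀ = -sk A := by
  rw [sk, transpose_smul, transpose_sub, transpose_transpose, ← smul_neg, neg_sub]

theorem transpose_hat (x : V3) : (hat x)ᵀ = -hat x := by
  ext i j
  fin_cases i <;> fin_cases j <;> simp [hat]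

theorem hat_vee {S : M3} (hS : Sᵀ = -S) : hat (vee S) = S := by
  have entry_swap (i j : Fin 3) : S j i = -S i j := congrFun₂ hS i j
  have diag_zero (i : Fin 3) : S i i = 0 := self_eq_neg.mp (entry_swap i i)
  ext i j
  fin_cases i <;> fin_cases j <;> simp [hat, vee, diag_zero, ← entry_swap]

theorem trace_hat_mul_hat (x y : V3) : (hat x * hat y).trace = -2 * dotp x y := by
  simp only [hat, dotp, trace_fin_three, Matrix.mul_apply, Fin.sum_univ_three, of_apply, cons_val]
  ring

theorem trace_hat_mul (x : V3) (A : M3) : (hat x * A).trace = -2 * dotp x (vee (sk A)) := by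
  calc (hat x * A).trace = (hat x * sk A).trace := (trace_mul_sk (transpose_hat x) A).symm
    _ = (hat x * hat (vee (sk A))).trace := by rw [hat_vee (transpose_sk A)]
    _ = -2 * dotp x (vee (sk A)) := trace_hat_mul_hat x _

section EntrywiseDerivative

variable {𝕜 : Type*} [NontriviallyNormedField 𝕜] {l m n : Type*} {s : Set 𝕜} {t : 𝕜}

theorem hasDerivWithinAt_matrix_mul_apply {𝔸 : Type*} [NormedRing 𝔸] [NormedAlgebra 𝕜 𝔸]
    [Fintype m] {A : 𝕜 → Matrix l m 𝔸} {B : 𝕜 → Matrix m n 𝔸} {A' : Matrix l m 𝔸}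
    {B' : Matrix m n 𝔸} {i : l} {j : n}
    (hA : ∀ k, HasDerivWithinAt (fun u => A u i k) (A' i k) s t)
    (hB : ∀ k, HasDerivWithinAt (fun u => B u k j) (B' k j) s t) :
    HasDerivWithinAt (fun u => (A u * B u) i j) ((A' * B t + A t * B') i j) s t := by
  simp only [Matrix.add_apply, Matrix.mul_apply, ← Finset.sum_add_distrib]
  exact HasDerivWithinAt.fun_sum fun k _ => (hA k).fun_mul (hB k)

theorem hasDerivWithinAt_trace {E : Type*} [NormedAddCommGroup E] [NormedSpace 𝕜 E] [Fintype n]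
    {A : 𝕜 → Matrix n n E} {A' : Matrix n n E}
    (hA : ∀ i, HasDerivWithinAt (fun u => A u i i) (A' i i) s t) :
    HasDerivWithinAt (fun u => (A u).trace) A'.trace s t :=
  HasDerivWithinAt.fun_sum fun i _ => hA i

end EntrywiseDerivative

theorem hasDerivWithinAt_phi {R : ℝ → M3} {R' : M3} {s : Set ℝ} {t : ℝ}
    (hR : ∀ i, HasDerivWithinAt (fun u => R u i i) (R' i i) s t) :
    HasDerivWithinAt (fun u => phi (R u)) (-(1 / 2) * R'.trace) s t := by
  simp only [phi, trace_sub]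
  exact (((hasDerivWithinAt_trace hR).const_sub _).const_mul _).congr_deriv (by ring)

theorem deriv_phi_error_general {R Rg : ℝ → M3} {Rg' : M3} {ω : V3} {s : Set ℝ} {t : ℝ}
    (hR : ∀ i j, HasDerivWithinAt (fun u => R u i j) ((R t * hat ω) i j) s t)
    (hRg : ∀ i j, HasDerivWithinAt (fun u => Rg u i j) (Rg' i j) s t) :
    HasDerivWithinAt (fun u => phi ((R u)ᵀ * Rg u))
      (-(dotp ω (vee (sk ((R t)ᵀ * Rg t)))) - (1 / 2) * ((R t)ᵀ * Rg').trace) s t := by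
  have hRe (i j : Fin 3) : HasDerivWithinAt (fun u => ((R u)ᵀ * Rg u) i j)
      (((R t * hat ω)ᵀ * Rg t + (R t)ᵀ * Rg') i j) s t :=
    hasDerivWithinAt_matrix_mul_apply (A := fun u => (R u)ᵀ) (fun k => hR k i) fun k => hRg k j
  have transpose_velocity_mul : (R t * hat ω)ᵀ * Rg t = -(hat ω * ((R t)ᵀ * Rg t)) := by
    rw [transpose_mul, transpose_hat, Matrix.neg_mul, Matrix.neg_mul, Matrix.mul_assoc]
  refine (hasDerivWithinAt_phi fun i => hRe i i).congr_deriv ?_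
  rw [transpose_velocity_mul, trace_add, trace_neg, trace_hat_mul]
  ring

/-- Derivative of the attitude error along differentiable curves on `SO(3)`:
if `Ṙ = R ω̂` on an interval `I`, then for `R_e = RᵀR_g`,
`(d/dt) φ(R_e) = −ωᵀ·sk(R_e)∨ − (1/2)·tr(Rᵀ Ṙ_g)` on `I`. -/
theorem deriv_phi_error (I : Set ℝ) (hI : I.OrdConnected)
    (R Rg Rg' : ℝ → M3) (ω : ℝ → V3)
    (hSO : ∀ t ∈ I, SO3 (R t) ∧ SO3 (Rg t))
    (hR : ∀ t ∈ I, ∀ i j, HasDerivAt (fun s => R s i j) ((R t * hat (ω t)) i j) t)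
    (hRg : ∀ t ∈ I, ∀ i j, HasDerivAt (fun s => Rg s i j) (Rg' t i j) t) :
    ∀ t ∈ I, HasDerivAt (fun s => phi ((R s)ᵀ * Rg s))
      (-(dotp (ω t) (vee (sk ((R t)ᵀ * Rg t)))) - (1 / 2) * ((R t)ᵀ * Rg' t).trace) t := by
  intro t ht
  simpa only [hasDerivWithinAt_univ] using deriv_phi_error_general (s := Set.univ)
    (fun i j => (hR t ht i j).hasDerivWithinAt) (fun i j => (hRg t ht i j).hasDerivWithinAt)
end
end

section
/- Let R_g ∈ SO(3) be a constant reference and let (R(t), ω(t)) be a solution on [0, ∞) of the rigid-body closed-loop system with this constant reference. If the initial Lyapunov value satisfies V(0) := (1/2)·ω(0)ᵀJω(0) + k_p·φ(R(0)ᵀR_g) < 2·k_p, then R(t) → R_g and ω(t) → 0 as t → ∞. -/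
noncomputable section
open Matrix Filter

/-- PD control law `τ = k_p·sk(RᵀR_g)∨ − k_d·ω`. -/
def tauPD (kp kd : ℝ) (R Rg : M3) (ω : V3) : V3 :=
  kp • vee (sk (Rᵀ * Rg)) - kd • ω

/- Write `E = RᵀR_g` for the attitude error and `e = sk(E)∨`. The energy `V = ½ ωᵀJω + k_p φ(E)`
satisfies only `V̇ = -k_d |ω|²`, which says nothing about `e`. Subtracting a small multiple of the
cross term `(Jω) · e`, whose derivative contains `k_p |e|²`, gives a function `W` comparable to `V`
with `Ẇ ≤ -δ (|ω|² + |e|²)`. On `SO(3)` one has `|e|² = φ (2 - φ)`, and `V ≤ V(0) < 2 k_p` keeps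
`φ ≤ 2 - d` with `d > 0`; hence `|e|² ≥ d φ`, so that `W` is bounded by a multiple of
`|ω|² + |e|²` and decays exponentially. -/

section DotProduct

variable {m n : Type*} [Fintype m] [Fintype n]

lemma dotProduct_self_nonneg (v : n → ℝ) : 0 ≤ v ⬝ᵥ v :=
  dotProduct_self_star_nonneg v

lemma sq_dotProduct_le (v w : n → ℝ) : (v ⬝ᵥ w) ^ 2 ≤ (v ⬝ᵥ v) * (w ⬝ᵥ w) := by
  simpa only [dotProduct, sq] using Finset.sum_mul_sq_le_sq_mul_sq Finset.univ v w

lemma two_mul_abs_dotProduct_le {c : ℝ} (hc : 0 < c) (v w : n → ℝ) :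
    2 * |v ⬝ᵥ w| ≤ c⁻¹ * (v ⬝ᵥ v) + c * (w ⬝ᵥ w) := by
  have hv := dotProduct_self_nonneg v
  have hw := dotProduct_self_nonneg w
  have hsq : (v ⬝ᵥ w) ^ 2 ≤ (c⁻¹ * (v ⬝ᵥ v)) * (c * (w ⬝ᵥ w)) := by
    rw [mul_mul_mul_comm, inv_mul_cancel₀ hc.ne', one_mul]
    exact sq_dotProduct_le v w
  rw [← abs_two, ← abs_mul]
  refine abs_le_of_sq_le_sq ?_ (by positivity)
  linarith [four_mul_le_sq_add (c⁻¹ * (v ⬝ᵥ v)) (c * (w ⬝ᵥ w)), mul_pow 2 (v ⬝ᵥ w) 2]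

lemma trace_transpose_mul_self_nonneg (A : Matrix m n ℝ) : 0 ≤ (Aᵀ * A).trace := by
  simpa only [vec_dotProduct_vec] using dotProduct_self_nonneg (vec A)

lemma mulVec_dotProduct_mulVec_self_le (A : Matrix m n ℝ) (v : n → ℝ) :
    (A *ᵥ v) ⬝ᵥ (A *ᵥ v) ≤ (Aᵀ * A).trace * (v ⬝ᵥ v) := by
  calc (A *ᵥ v) ⬝ᵥ (A *ᵥ v) = ∑ i, (A i ⬝ᵥ v) ^ 2 :=
        Finset.sum_congr rfl fun i _ => (sq (A i ⬝ᵥ v)).symm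
    _ ≤ ∑ i, (A i ⬝ᵥ A i) * (v ⬝ᵥ v) :=
        Finset.sum_le_sum fun i _ => sq_dotProduct_le (A i) v
    _ = (Aᵀ * A).trace * (v ⬝ᵥ v) := by
        rw [← Finset.sum_mul, trace_mul_comm]
        rfl

lemma sq_trace_le (A : Matrix n n ℝ) :
    A.trace ^ 2 ≤ Fintype.card n * (Aᵀ * A).trace := by
  classical
  simpa only [vec_dotProduct_vec, transpose_one, one_mul, trace_one] using
    sq_dotProduct_le (vec 1) (vec A)

lemma mulVec_dotProduct_of_isSymm {J : Matrix n n ℝ} (hJ : J.IsSymm) (v w : n → ℝ) :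
    (J *ᵥ v) ⬝ᵥ w = v ⬝ᵥ (J *ᵥ w) := by
  rw [dotProduct_mulVec, ← mulVec_transpose, hJ.eq]

open scoped MatrixOrder Matrix.Norms.L2Operator in
lemma dotProduct_self_le_trace_inv_mul [DecidableEq n] {J : Matrix n n ℝ} (hJ : J.PosDef)
    (v : n → ℝ) : v ⬝ᵥ v ≤ J⁻¹.trace * (v ⬝ᵥ (J *ᵥ v)) := by
  obtain ⟨B, hB, rfl⟩ :=
    CStarAlgebra.isStrictlyPositive_iff_eq_star_mul_self.mp hJ.isStrictlyPositive
  have hBdet : IsUnit B.det := (isUnit_iff_isUnit_det B).mp hB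
  have hstar : star B = Bᵀ := conjTranspose_eq_transpose_of_trivial B
  calc v ⬝ᵥ v = (B⁻¹ *ᵥ (B *ᵥ v)) ⬝ᵥ (B⁻¹ *ᵥ (B *ᵥ v)) := by
        rw [mulVec_mulVec, nonsing_inv_mul B hBdet, one_mulVec]
    _ ≤ ((B⁻¹)ᵀ * B⁻¹).trace * ((B *ᵥ v) ⬝ᵥ (B *ᵥ v)) := mulVec_dotProduct_mulVec_self_le _ _
    _ = (star B * B)⁻¹.trace * (v ⬝ᵥ ((star B * B) *ᵥ v)) := by
        rw [hstar, Matrix.mul_inv_rev, trace_mul_comm, transpose_nonsing_inv, dotProduct_mulVec,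
          vecMul_mulVec, dotProduct_mulVec]

lemma tendsto_zero_of_dotProduct_self {α : Type*} {l : Filter α} {f : α → n → ℝ}
    (h : Tendsto (fun t => f t ⬝ᵥ f t) l (nhds 0)) : Tendsto f l (nhds 0) := by
  refine tendsto_pi_nhds.mpr fun i => ?_
  have hsq : Tendsto (fun t => f t i ^ 2) l (nhds 0) :=
    squeeze_zero (fun t => sq_nonneg (f t i)) (fun t => by
      rw [sq]
      exact Finset.single_le_sum (f := fun i => f t i * f t i)
        (fun j _ => mul_self_nonneg _) (Finset.mem_univ i)) h
  have habs := hsq.sqrt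
  simp only [Real.sqrt_sq_eq_abs, Real.sqrt_zero] at habs
  exact (tendsto_zero_iff_abs_tendsto_zero _).mpr habs

lemma hasDerivAt_dotProduct {f g : ℝ → n → ℝ} {f' g' : n → ℝ} {t : ℝ}
    (hf : HasDerivAt f f' t) (hg : HasDerivAt g g' t) :
    HasDerivAt (fun s => f s ⬝ᵥ g s) (f' ⬝ᵥ g t + f t ⬝ᵥ g') t := by
  have hsum := HasDerivAt.fun_sum (u := Finset.univ) fun i _ =>
    (hasDerivAt_pi.mp hf i).mul (hasDerivAt_pi.mp hg i)
  rwa [Finset.sum_add_distrib] at hsum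

lemma hasDerivAt_transpose_mul_apply {k l : Type*} {A : ℝ → Matrix n k ℝ} {A' : Matrix n k ℝ}
    {t : ℝ} (hA : ∀ i j, HasDerivAt (fun s => A s i j) (A' i j) t) (B : Matrix n l ℝ)
    (i : k) (j : l) :
    HasDerivAt (fun s => ((A s)ᵀ * B) i j) ((A'ᵀ * B) i j) t := by
  have hsum := HasDerivAt.fun_sum (u := Finset.univ) fun r _ => (hA r i).mul_const (B r j)
  exact hsum

lemma hasDerivAt_mulVec {k : Type*} [Finite k] (A : Matrix k n ℝ) {f : ℝ → n → ℝ} {f' : n → ℝ}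
    {t : ℝ} (hf : HasDerivAt f f' t) : HasDerivAt (fun s => A *ᵥ f s) (A *ᵥ f') t :=
  have := Fintype.ofFinite k
  A.mulVecLin.toContinuousLinearMap.hasFDerivAt.comp_hasDerivAt t hf

end DotProduct

section LyapunovDecay

lemma antitoneOn_Ici_of_hasDerivAt_nonpos {a : ℝ} {f f' : ℝ → ℝ}
    (hf : ∀ t, a ≤ t → HasDerivAt f (f' t) t) (hf' : ∀ t, a ≤ t → f' t ≤ 0) :
    AntitoneOn f (Set.Ici a) :=
  antitoneOn_of_hasDerivWithinAt_nonpos (f' := f') (convex_Ici a)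
    (fun t ht => (hf t ht).continuousAt.continuousWithinAt)
    (fun t ht => (hf t (interior_subset ht)).hasDerivWithinAt)
    (fun t ht => hf' t (interior_subset ht))

lemma le_mul_exp_neg_of_hasDerivAt_le {a α : ℝ} {W W' : ℝ → ℝ}
    (hW : ∀ t, a ≤ t → HasDerivAt W (W' t) t) (hW' : ∀ t, a ≤ t → W' t ≤ -α * W t)
    {t : ℝ} (ht : a ≤ t) : W t ≤ W a * Real.exp (-(α * (t - a))) := by
  have hanti : AntitoneOn (fun t => W t * Real.exp (α * (t - a))) (Set.Ici a) :=
    antitoneOn_Ici_of_hasDerivAt_nonpos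
      (fun s hs => (hW s hs).mul ((((hasDerivAt_id s).sub_const a).const_mul α).exp))
      (fun s hs => by
        have := mul_le_mul_of_nonneg_right (hW' s hs) (Real.exp_pos (α * (s - a))).le
        simp only [id_eq]
        linarith)
  have hle := hanti Set.self_mem_Ici ht ht
  simp only [sub_self, mul_zero, Real.exp_zero, mul_one] at hle
  rwa [Real.exp_neg, ← div_eq_mul_inv, le_div_iff₀ (Real.exp_pos _)]

lemma tendsto_zero_of_hasDerivAt_le_neg_mul {a α : ℝ} (hα : 0 < α) {W W' : ℝ → ℝ}
    (hW : ∀ t, a ≤ t → HasDerivAt W (W' t) t) (hW' : ∀ t, a ≤ t → W' t ≤ -α * W t)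
    (hnonneg : ∀ t, a ≤ t → 0 ≤ W t) : Tendsto W atTop (nhds 0) := by
  have hexp : Tendsto (fun t => W a * Real.exp (-(α * (t - a)))) atTop (nhds 0) := by
    have hlin : Tendsto (fun t => α * (t - a)) atTop atTop :=
      (tendsto_atTop_add_const_right atTop (-a) tendsto_id).const_mul_atTop hα
    simpa using (Real.tendsto_exp_neg_atTop_nhds_zero.comp hlin).const_mul (W a)
  refine squeeze_zero' ?_ ?_ hexp
  · filter_upwards [eventually_ge_atTop a] with t ht using hnonneg t ht
  · filter_upwards [eventually_ge_atTop a] with t ht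
      using le_mul_exp_neg_of_hasDerivAt_le hW hW' ht

lemma tendsto_zero_of_hasDerivAt_le_of_le {a B δ : ℝ} (hB : 0 < B) (hδ : 0 < δ)
    {W W' z : ℝ → ℝ} (hW : ∀ t, a ≤ t → HasDerivAt W (W' t) t)
    (hW' : ∀ t, a ≤ t → W' t ≤ -(δ * z t)) (hWle : ∀ t, a ≤ t → W t ≤ B * z t)
    (hnonneg : ∀ t, a ≤ t → 0 ≤ W t) : Tendsto W atTop (nhds 0) := by
  refine tendsto_zero_of_hasDerivAt_le_neg_mul (div_pos hδ hB) hW (fun t ht => ?_) hnonneg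
  calc W' t ≤ -(δ * z t) := hW' t ht
    _ = -(δ / B) * (B * z t) := by field_simp
    _ ≤ -(δ / B) * W t :=
      mul_le_mul_of_nonpos_left (hWle t ht) (neg_nonpos.mpr (div_pos hδ hB).le)

lemma tendsto_zero_of_hasDerivAt_of_crossTerm {t₀ a b B K M : ℝ}
    (ha : 0 < a) (hb : 0 < b) (hB : 0 < B) (hK : 0 < K) (hM : 0 < M)
    {V C V' C' x y : ℝ → ℝ} (hx : ∀ t, t₀ ≤ t → 0 ≤ x t) (hy : ∀ t, t₀ ≤ t → 0 ≤ y t)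
    (hV : ∀ t, t₀ ≤ t → HasDerivAt V (V' t) t) (hC : ∀ t, t₀ ≤ t → HasDerivAt C (C' t) t)
    (hV' : ∀ t, t₀ ≤ t → V' t ≤ -(a * x t))
    (hC' : ∀ t, t₀ ≤ t → b * y t - M * x t ≤ C' t)
    (hVle : ∀ t, t₀ ≤ t → V t ≤ B * (x t + y t))
    (hCle : ∀ t, t₀ ≤ t → |C t| ≤ K * V t) : Tendsto V atTop (nhds 0) := by
  obtain ⟨ε, hε, hεK, hεM⟩ : ∃ ε > 0, ε * K ≤ 1 / 2 ∧ ε * M ≤ a / 2 :=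
    ⟨min (1 / 2 / K) (a / 2 / M), by positivity,
      (le_div_iff₀ hK).mp (min_le_left _ _), (le_div_iff₀ hM).mp (min_le_right _ _)⟩
  obtain ⟨δ, hδ, hδx, hδy⟩ : ∃ δ > 0, δ ≤ a / 2 ∧ δ ≤ ε * b :=
    ⟨min (a / 2) (ε * b), by positivity, min_le_left _ _, min_le_right _ _⟩
  have hVnonneg : ∀ t, t₀ ≤ t → 0 ≤ V t := fun t ht =>
    nonneg_of_mul_nonneg_right ((abs_nonneg _).trans (hCle t ht)) hK
  have hεC : ∀ t, t₀ ≤ t → |ε * C t| ≤ V t / 2 := fun t ht => by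
    rw [abs_mul, abs_of_pos hε]
    linarith [mul_le_mul_of_nonneg_left (hCle t ht) hε.le,
      mul_le_mul_of_nonneg_right hεK (hVnonneg t ht)]
  have hWdiss : ∀ t, t₀ ≤ t → V' t - ε * C' t ≤ -(δ * (x t + y t)) := fun t ht => by
    linarith [hV' t ht, mul_le_mul_of_nonneg_left (hC' t ht) hε.le,
      mul_le_mul_of_nonneg_right hεM (hx t ht), mul_le_mul_of_nonneg_right hδx (hx t ht),
      mul_le_mul_of_nonneg_right hδy (hy t ht)]
  have hWle : ∀ t, t₀ ≤ t → V t - ε * C t ≤ 3 / 2 * B * (x t + y t) := fun t ht => by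
    linarith [hVle t ht, neg_le_of_abs_le (hεC t ht)]
  have hVleW : ∀ t, t₀ ≤ t → V t ≤ 2 * (V t - ε * C t) := fun t ht => by
    linarith [le_of_abs_le (hεC t ht)]
  have hWlim : Tendsto (fun t => V t - ε * C t) atTop (nhds 0) :=
    tendsto_zero_of_hasDerivAt_le_of_le (by positivity) hδ
      (fun t ht => (hV t ht).sub ((hC t ht).const_mul ε)) hWdiss hWle
      (fun t ht => by linarith [hVleW t ht, hVnonneg t ht])
  refine squeeze_zero' ?_ ?_ (by simpa using hWlim.const_mul 2)
  · filter_upwards [eventually_ge_atTop t₀] with t ht using hVnonneg t ht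
  · filter_upwards [eventually_ge_atTop t₀] with t ht using hVleW t ht

end LyapunovDecay

section AttitudeError

/-- The attitude error vector `e(E) = sk(E)∨` of `E = RᵀR_g`, to which the proportional term of the
control law is proportional. -/
def attitudeError (E : M3) : V3 := vee (sk E)

/-- The matrix `G(E) = ½ (Eᵀ - tr(E) I)`. Along `Ė = ω̂ᵀ E` it satisfies `ė + ω × e = G(E) ω`, so
`G(E) ω` is the rate of change of the attitude error seen from the inertial frame. -/
def inertialErrorRate (E : M3) : M3 := (1 / 2 : ℝ) • (Eᵀ - E.trace • (1 : M3))

lemma phi_eq (E : M3) : phi E = (3 - E.trace) / 2 := by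
  rw [phi, trace_sub, trace_one, Fintype.card_fin]
  push_cast
  ring

lemma trace_transpose_hat_mul (w : V3) (E : M3) :
    ((hat w)ᵀ * E).trace = 2 * (w ⬝ᵥ attitudeError E) := by
  simp only [attitudeError, vee, sk, hat, dotProduct, trace_fin_three, mul_apply, transpose_apply,
    of_apply, Matrix.smul_apply, Matrix.sub_apply, smul_eq_mul, Fin.sum_univ_three, Fin.isValue,
    cons_val', cons_val_zero, cons_val_fin_one, cons_val_one, cons_val]
  ring

lemma attitudeError_transpose_hat_mul (w : V3) (E : M3) :
    attitudeError ((hat w)ᵀ * E) + w ⨯₃ attitudeError E = inertialErrorRate E *ᵥ w := by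
  ext i
  fin_cases i <;>
    simp [attitudeError, inertialErrorRate, vee, sk, hat, cross_apply, mulVec, dotProduct,
      trace_fin_three, mul_apply, Fin.sum_univ_three, one_apply] <;>
    ring

lemma four_mul_attitudeError_dotProduct_self (E : M3) :
    4 * (attitudeError E ⬝ᵥ attitudeError E) = (Eᵀ * E).trace - (E * E).trace := by
  simp only [attitudeError, vee, sk, dotProduct, trace_fin_three, mul_apply, transpose_apply,
    Matrix.smul_apply, Matrix.sub_apply, smul_eq_mul, Fin.sum_univ_three, Fin.isValue,
    cons_val_zero, cons_val_one, cons_val]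
  ring

lemma two_mul_trace_adjugate_fin_three {S : Type*} [CommRing S] (A : Matrix (Fin 3) (Fin 3) S) :
    2 * A.adjugate.trace = A.trace ^ 2 - (A * A).trace := by
  rw [adjugate_fin_three]
  simp only [trace_fin_three, mul_apply, of_apply, Fin.sum_univ_three, Fin.isValue, cons_val',
    cons_val_zero, cons_val_fin_one, cons_val_one, cons_val]
  ring

lemma adjugate_eq_transpose {n S : Type*} [Fintype n] [DecidableEq n] [CommRing S]
    {A : Matrix n n S} (hA : Aᵀ * A = 1) (hdet : A.det = 1) : A.adjugate = Aᵀ := by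
  rw [← Matrix.mul_one A.adjugate, ← mul_eq_one_comm.mp hA, ← Matrix.mul_assoc, adjugate_mul,
    hdet, one_smul, Matrix.one_mul]

lemma SO3.transpose_mul {R S : M3} (hR : SO3 R) (hS : SO3 S) : SO3 (Rᵀ * S) := by
  refine ⟨?_, by rw [det_mul, det_transpose, hR.2, hS.2, one_mul]⟩
  rw [Matrix.transpose_mul, transpose_transpose, Matrix.mul_assoc, ← Matrix.mul_assoc R,
    mul_eq_one_comm.mp hR.1, Matrix.one_mul, hS.1]

lemma SO3.attitudeError_dotProduct_self {E : M3} (hE : SO3 E) :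
    attitudeError E ⬝ᵥ attitudeError E = phi E * (2 - phi E) := by
  have herr := four_mul_attitudeError_dotProduct_self E
  have hadj := two_mul_trace_adjugate_fin_three E
  rw [adjugate_eq_transpose hE.1 hE.2, trace_transpose] at hadj
  rw [hE.1, trace_one, Fintype.card_fin] at herr
  push_cast at herr
  rw [phi_eq]
  linarith

lemma trace_transpose_sub_mul_sub {R S : M3} (hR : Rᵀ * R = 1) (hS : Sᵀ * S = 1) :
    ((R - S)ᵀ * (R - S)).trace = 4 * phi (Rᵀ * S) := by
  have hcross : (Sᵀ * R).trace = (Rᵀ * S).trace := by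
    rw [← trace_transpose, Matrix.transpose_mul, transpose_transpose]
  rw [transpose_sub, Matrix.sub_mul, Matrix.mul_sub, Matrix.mul_sub, hR, hS, trace_sub, trace_sub,
    trace_sub, hcross, phi_eq, trace_one, Fintype.card_fin]
  push_cast
  ring

lemma phi_nonneg {E : M3} (hE : Eᵀ * E = 1) : 0 ≤ phi E := by
  have hsub := trace_transpose_sub_mul_sub (R := 1) (by simp) hE
  rw [transpose_one, Matrix.one_mul] at hsub
  linarith [trace_transpose_mul_self_nonneg (1 - E)]

lemma trace_inertialErrorRate_le {E : M3} (hE : Eᵀ * E = 1) :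
    ((inertialErrorRate E)ᵀ * inertialErrorRate E).trace ≤ 3 := by
  have htrace : E.trace ^ 2 ≤ 9 := by
    have := sq_trace_le E
    rw [hE, trace_one, Fintype.card_fin] at this
    push_cast at this
    linarith
  have hrate : 4 * ((inertialErrorRate E)ᵀ * inertialErrorRate E).trace = 3 + E.trace ^ 2 := by
    simp only [inertialErrorRate, transpose_smul, transpose_sub, transpose_transpose,
      transpose_one, Matrix.smul_mul, Matrix.mul_smul, Matrix.sub_mul, Matrix.mul_sub,
      mul_eq_one_comm.mp hE, Matrix.mul_one, Matrix.one_mul, trace_smul, trace_sub, trace_one,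
      trace_transpose, Fintype.card_fin, smul_eq_mul]
    push_cast
    ring
  linarith

lemma tendsto_of_tendsto_phi {α : Type*} {l : Filter α} {R : α → M3} {S : M3}
    (hR : ∀ᶠ t in l, (R t)ᵀ * R t = 1) (hS : Sᵀ * S = 1)
    (h : Tendsto (fun t => phi ((R t)ᵀ * S)) l (nhds 0)) : Tendsto R l (nhds S) := by
  have hvec : Tendsto (fun t => vec (R t - S)) l (nhds 0) := by
    refine tendsto_zero_of_dotProduct_self (Tendsto.congr' ?_ (by simpa using h.const_mul 4))
    filter_upwards [hR] with t ht
    rw [vec_dotProduct_vec, trace_transpose_sub_mul_sub ht hS]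
  refine tendsto_pi_nhds.mpr fun i => tendsto_pi_nhds.mpr fun j => ?_
  exact tendsto_sub_nhds_zero_iff.mp (tendsto_pi_nhds.mp hvec (j, i))

end AttitudeError

section ClosedLoop

/-- The energy `½ ωᵀJω + k_p φ(E)` of the closed loop at attitude error `E` and angular
velocity `w`. -/
def closedLoopEnergy (J : M3) (kp : ℝ) (E : M3) (w : V3) : ℝ :=
  (1 / 2) * (w ⬝ᵥ (J *ᵥ w)) + kp * phi E

section Derivatives

variable {t : ℝ} {E : ℝ → M3} {ω : ℝ → V3} {ω' : V3}

lemma hasDerivAt_phi {E' : M3} (hE : ∀ i j, HasDerivAt (fun s => E s i j) (E' i j) t) :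
    HasDerivAt (fun s => phi (E s)) (-(E'.trace / 2)) t := by
  have htrace : HasDerivAt (fun s => (E s).trace) E'.trace t :=
    HasDerivAt.fun_sum fun i _ => hE i i
  simp only [phi_eq, ← neg_div]
  exact (htrace.const_sub 3).div_const 2

lemma hasDerivAt_attitudeError {E' : M3}
    (hE : ∀ i j, HasDerivAt (fun s => E s i j) (E' i j) t) :
    HasDerivAt (fun s => attitudeError (E s)) (attitudeError E') t := by
  have hsk : ∀ i j, HasDerivAt (fun s => sk (E s) i j) (sk E' i j) t := fun i j =>
    ((hE i j).sub (hE j i)).const_mul (1 / 2)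
  refine hasDerivAt_pi.mpr fun i => ?_
  fin_cases i
  exacts [hsk 2 1, hsk 0 2, hsk 1 0]

variable {J : M3} {kp kd : ℝ}

lemma hasDerivAt_closedLoopEnergy (hJ : J.IsSymm)
    (hE : ∀ i j, HasDerivAt (fun s => E s i j) (((hat (ω t))ᵀ * E t) i j) t)
    (hω : HasDerivAt ω ω' t)
    (hdyn : J *ᵥ ω' = (J *ᵥ ω t) ⨯₃ ω t + (kp • attitudeError (E t) - kd • ω t)) :
    HasDerivAt (fun s => closedLoopEnergy J kp (E s) (ω s)) (-(kd * (ω t ⬝ᵥ ω t))) t := by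
  have hkin := (hasDerivAt_dotProduct hω (hasDerivAt_mulVec J hω)).const_mul (1 / 2)
  refine (hkin.add ((hasDerivAt_phi hE).const_mul kp)).congr_deriv ?_
  rw [← mulVec_dotProduct_of_isSymm hJ ω', dotProduct_comm (J *ᵥ ω'), hdyn,
    trace_transpose_hat_mul, dotProduct_add, dotProduct_sub, dot_cross_self, dotProduct_smul,
    dotProduct_smul, smul_eq_mul, smul_eq_mul]
  ring

/- In the inertial frame the angular momentum `π = Jω` changes only through the control torque and
the error `e` at the rate `G(E) ω`; the gyroscopic term therefore cancels from `d(π · e)/dt`. -/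
lemma hasDerivAt_mulVec_dotProduct_attitudeError
    (hE : ∀ i j, HasDerivAt (fun s => E s i j) (((hat (ω t))ᵀ * E t) i j) t)
    (hω : HasDerivAt ω ω' t)
    (hdyn : J *ᵥ ω' = (J *ᵥ ω t) ⨯₃ ω t + (kp • attitudeError (E t) - kd • ω t)) :
    HasDerivAt (fun s => (J *ᵥ ω s) ⬝ᵥ attitudeError (E s))
      ((J *ᵥ ω t) ⬝ᵥ (inertialErrorRate (E t) *ᵥ ω t)
        + kp * (attitudeError (E t) ⬝ᵥ attitudeError (E t))
        - kd * (ω t ⬝ᵥ attitudeError (E t))) t := by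
  refine (hasDerivAt_dotProduct (hasDerivAt_mulVec J hω)
    (hasDerivAt_attitudeError hE)).congr_deriv ?_
  have hgyro : ((J *ᵥ ω t) ⨯₃ ω t) ⬝ᵥ attitudeError (E t)
      = (J *ᵥ ω t) ⬝ᵥ (ω t ⨯₃ attitudeError (E t)) := by
    rw [dotProduct_comm, triple_product_permutation]
  rw [hdyn, ← attitudeError_transpose_hat_mul, add_dotProduct, sub_dotProduct, hgyro,
    smul_dotProduct, smul_dotProduct, dotProduct_add, smul_eq_mul, smul_eq_mul]
  ring

end Derivatives

section Estimates

variable {J E : M3} {kp kd : ℝ}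

lemma crossTerm_deriv_ge (J : M3) (hkp : 0 < kp) (hkd : 0 < kd) (hE : Eᵀ * E = 1) (w : V3) :
    kp / 2 * (attitudeError E ⬝ᵥ attitudeError E)
        - (((Jᵀ * J).trace + 3) / 2 + kd ^ 2 / (2 * kp)) * (w ⬝ᵥ w)
      ≤ (J *ᵥ w) ⬝ᵥ (inertialErrorRate E *ᵥ w) + kp * (attitudeError E ⬝ᵥ attitudeError E)
        - kd * (w ⬝ᵥ attitudeError E) := by
  have hrate : 2 * |(J *ᵥ w) ⬝ᵥ (inertialErrorRate E *ᵥ w)|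
      ≤ ((Jᵀ * J).trace + 3) * (w ⬝ᵥ w) := by
    linarith [two_mul_abs_dotProduct_le one_pos (J *ᵥ w) (inertialErrorRate E *ᵥ w),
      mulVec_dotProduct_mulVec_self_le J w,
      mulVec_dotProduct_mulVec_self_le (inertialErrorRate E) w,
      mul_le_mul_of_nonneg_right (trace_inertialErrorRate_le hE) (dotProduct_self_nonneg w)]
  have hdamp : 2 * (kd * |w ⬝ᵥ attitudeError E|)
      ≤ kd ^ 2 / kp * (w ⬝ᵥ w) + kp * (attitudeError E ⬝ᵥ attitudeError E) := by
    have h := mul_le_mul_of_nonneg_left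
      (two_mul_abs_dotProduct_le (div_pos hkp hkd) w (attitudeError E)) hkd.le
    field_simp at h ⊢
    linarith
  have hdamp' := mul_le_mul_of_nonneg_left (le_abs_self (w ⬝ᵥ attitudeError E)) hkd.le
  have hsplit : kd ^ 2 / (2 * kp) * (w ⬝ᵥ w) = kd ^ 2 / kp * (w ⬝ᵥ w) / 2 := by field_simp
  linarith [neg_abs_le ((J *ᵥ w) ⬝ᵥ (inertialErrorRate E *ᵥ w))]

lemma mul_phi_le_closedLoopEnergy (hJ : J.PosDef) (kp : ℝ) (E : M3) (w : V3) :
    kp * phi E ≤ closedLoopEnergy J kp E w := by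
  have hkin : 0 ≤ w ⬝ᵥ (J *ᵥ w) := by
    simpa using hJ.posSemidef.dotProduct_mulVec_nonneg w
  rw [closedLoopEnergy]
  linarith

lemma dotProduct_self_le_closedLoopEnergy (hJ : J.PosDef) (hkp : 0 ≤ kp) (hE : Eᵀ * E = 1)
    (w : V3) : w ⬝ᵥ w ≤ 2 * J⁻¹.trace * closedLoopEnergy J kp E w := by
  have hpot := mul_nonneg hJ.inv.posSemidef.trace_nonneg (mul_nonneg hkp (phi_nonneg hE))
  rw [closedLoopEnergy]
  linarith [dotProduct_self_le_trace_inv_mul hJ w]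

lemma attitudeError_dotProduct_self_le_closedLoopEnergy (hJ : J.PosDef) (hkp : 0 < kp)
    (hE : SO3 E) (w : V3) :
    attitudeError E ⬝ᵥ attitudeError E ≤ 2 / kp * closedLoopEnergy J kp E w := by
  have henergy := mul_phi_le_closedLoopEnergy hJ kp E w
  rw [hE.attitudeError_dotProduct_self, div_mul_eq_mul_div, le_div_iff₀ hkp]
  nlinarith [mul_nonneg hkp.le (sq_nonneg (phi E))]

lemma closedLoopEnergy_le {d : ℝ} (hkp : 0 ≤ kp) (hd : 0 < d) (hE : SO3 E)
    (hphi : phi E ≤ 2 - d) (w : V3) :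
    closedLoopEnergy J kp E w ≤ (((Jᵀ * J).trace + 1) / 4 + kp / d)
      * (w ⬝ᵥ w + attitudeError E ⬝ᵥ attitudeError E) := by
  have hw := dotProduct_self_nonneg w
  have he := dotProduct_self_nonneg (attitudeError E)
  have hkin : 2 * (w ⬝ᵥ (J *ᵥ w)) ≤ ((Jᵀ * J).trace + 1) * (w ⬝ᵥ w) := by
    linarith [two_mul_abs_dotProduct_le one_pos w (J *ᵥ w), le_abs_self (w ⬝ᵥ (J *ᵥ w)),
      mulVec_dotProduct_mulVec_self_le J w]
  have hpot : kp * phi E ≤ kp / d * (attitudeError E ⬝ᵥ attitudeError E) := by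
    have hphid : phi E * d ≤ attitudeError E ⬝ᵥ attitudeError E := by
      rw [hE.attitudeError_dotProduct_self]
      exact mul_le_mul_of_nonneg_left (by linarith) (phi_nonneg hE.1)
    rw [div_mul_eq_mul_div, le_div_iff₀ hd, mul_assoc]
    exact mul_le_mul_of_nonneg_left hphid hkp
  have hkin' := mul_nonneg (trace_transpose_mul_self_nonneg J) he
  have hpot' := mul_nonneg (div_nonneg hkp hd.le) hw
  rw [closedLoopEnergy]
  linarith

lemma abs_mulVec_dotProduct_attitudeError_le (hJ : J.PosDef) (hkp : 0 < kp) (hE : SO3 E)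
    (w : V3) : |(J *ᵥ w) ⬝ᵥ attitudeError E|
      ≤ ((Jᵀ * J).trace * J⁻¹.trace + 1 / kp) * closedLoopEnergy J kp E w := by
  have hyoung := two_mul_abs_dotProduct_le one_pos (J *ᵥ w) (attitudeError E)
  have hvel := mul_le_mul_of_nonneg_left (dotProduct_self_le_closedLoopEnergy hJ hkp.le hE.1 w)
    (trace_transpose_mul_self_nonneg J)
  have hatt := attitudeError_dotProduct_self_le_closedLoopEnergy hJ hkp hE w
  have hsplit : 2 / kp * closedLoopEnergy J kp E w
      = 2 * (1 / kp * closedLoopEnergy J kp E w) := by ring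
  linarith [mulVec_dotProduct_mulVec_self_le J w]

end Estimates

theorem tendsto_closedLoopEnergy_zero {J : M3} {kp kd : ℝ} (hJ : J.PosDef) (hkp : 0 < kp)
    (hkd : 0 < kd) {E : ℝ → M3} {ω ω' : ℝ → V3} (hSO : ∀ t, 0 ≤ t → SO3 (E t))
    (hE : ∀ t, 0 ≤ t → ∀ i j,
      HasDerivAt (fun s => E s i j) (((hat (ω t))ᵀ * E t) i j) t)
    (hω : ∀ t, 0 ≤ t → HasDerivAt ω (ω' t) t)
    (hdyn : ∀ t, 0 ≤ t → J *ᵥ ω' t =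
      (J *ᵥ ω t) ⨯₃ ω t + (kp • attitudeError (E t) - kd • ω t))
    (h₀ : closedLoopEnergy J kp (E 0) (ω 0) < 2 * kp) :
    Tendsto (fun t => closedLoopEnergy J kp (E t) (ω t)) atTop (nhds 0) := by
  have hJsymm : J.IsSymm :=
    (conjTranspose_eq_transpose_of_trivial J).symm.trans hJ.isHermitian.eq
  have hJinv : 0 ≤ J⁻¹.trace := hJ.inv.posSemidef.trace_nonneg
  have hJsq := trace_transpose_mul_self_nonneg J
  have hV := fun t ht => hasDerivAt_closedLoopEnergy hJsymm (hE t ht) (hω t ht) (hdyn t ht)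
  have hanti := antitoneOn_Ici_of_hasDerivAt_nonpos hV fun t _ =>
    neg_nonpos.mpr (mul_nonneg hkd.le (dotProduct_self_nonneg (ω t)))
  obtain ⟨d, hd, hphi⟩ : ∃ d > 0, ∀ t, 0 ≤ t → phi (E t) ≤ 2 - d := by
    refine ⟨2 - closedLoopEnergy J kp (E 0) (ω 0) / kp,
      sub_pos.mpr ((div_lt_iff₀ hkp).mpr h₀), fun t ht => ?_⟩
    rw [sub_sub_cancel, le_div_iff₀' hkp]
    exact (mul_phi_le_closedLoopEnergy hJ kp (E t) (ω t)).trans (hanti Set.self_mem_Ici ht ht)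
  exact tendsto_zero_of_hasDerivAt_of_crossTerm hkd (half_pos hkp) (by positivity) (by positivity)
    (by positivity) (fun t _ => dotProduct_self_nonneg (ω t))
    (fun t _ => dotProduct_self_nonneg (attitudeError (E t))) hV
    (fun t ht => hasDerivAt_mulVec_dotProduct_attitudeError (hE t ht) (hω t ht) (hdyn t ht))
    (fun t _ => le_rfl) (fun t ht => crossTerm_deriv_ge J hkp hkd (hSO t ht).1 (ω t))
    (fun t ht => closedLoopEnergy_le hkp.le hd (hSO t ht) (hphi t ht) (ω t))
    (fun t ht => abs_mulVec_dotProduct_attitudeError_le hJ hkp (hSO t ht) (ω t))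

end ClosedLoop

/-- For a constant reference `R_g ∈ SO(3)` and a solution of the rigid-body
closed-loop system on `[0,∞)` with initial Lyapunov value `V(0) < 2 k_p`,
one has `R(t) → R_g` and `ω(t) → 0` as `t → ∞`. -/
theorem asymptotic_stability_constant_reference
    (J : M3) (kp kd : ℝ) (hJ : J.PosDef) (hkp : 0 < kp) (hkd : 0 < kd)
    (Rg : M3) (hRg : SO3 Rg)
    (R : ℝ → M3) (ω ω' : ℝ → V3)
    (hRSO : ∀ t ∈ Set.Ici (0 : ℝ), SO3 (R t))
    (hR : ∀ t ∈ Set.Ici (0 : ℝ), ∀ i j,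
      HasDerivAt (fun s => R s i j) ((R t * hat (ω t)) i j) t)
    (hω : ∀ t ∈ Set.Ici (0 : ℝ), ∀ i, HasDerivAt (fun s => ω s i) (ω' t i) t)
    (hdyn : ∀ t ∈ Set.Ici (0 : ℝ), J.mulVec (ω' t) =
      crossProduct (J.mulVec (ω t)) (ω t) + tauPD kp kd (R t) Rg (ω t))
    (hV0 : (1 / 2) * dotp (ω 0) (J.mulVec (ω 0)) + kp * phi ((R 0)ᵀ * Rg) < 2 * kp) :
    Tendsto R atTop (nhds Rg) ∧ Tendsto ω atTop (nhds 0) := by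
  have hSO : ∀ t, 0 ≤ t → SO3 ((R t)ᵀ * Rg) := fun t ht => (hRSO t ht).transpose_mul hRg
  have henergy : Tendsto (fun t => closedLoopEnergy J kp ((R t)ᵀ * Rg) (ω t)) atTop (nhds 0) :=
    tendsto_closedLoopEnergy_zero hJ hkp hkd hSO
      (fun t ht => by
        simpa only [Matrix.transpose_mul, Matrix.mul_assoc] using
          hasDerivAt_transpose_mul_apply (hR t ht) Rg)
      (fun t ht => hasDerivAt_pi.mpr (hω t ht)) hdyn hV0
  constructor
  · refine tendsto_of_tendsto_phi ?_ hRg.1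
      (squeeze_zero' ?_ ?_ (by simpa using henergy.const_mul kp⁻¹))
    · filter_upwards [eventually_ge_atTop 0] with t ht using (hRSO t ht).1
    · filter_upwards [eventually_ge_atTop 0] with t ht using phi_nonneg (hSO t ht).1
    · filter_upwards with t using
        (le_inv_mul_iff₀ hkp).mpr (mul_phi_le_closedLoopEnergy hJ kp ((R t)ᵀ * Rg) (ω t))
  · refine tendsto_zero_of_dotProduct_self (squeeze_zero' ?_ ?_
      (by simpa using henergy.const_mul (2 * J⁻¹.trace)))
    · filter_upwards with t using dotProduct_self_nonneg (ω t)
    · filter_upwards [eventually_ge_atTop 0] with t ht using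
        dotProduct_self_le_closedLoopEnergy hJ hkp.le (hSO t ht).1 (ω t)
end
end

section
/- (Robust safety margin persists over one sampling interval.) Let C > 0, c₁ > 0, c_Γ > 1, and let V, Γ : [t_k, ∞) → ℝ be differentiable with (Γ − V)'(t) ≥ −C and Γ(t) ≥ c₁ for all t ≥ t_k. If Γ(t_k) − c_Γ·V(t_k) ≥ 0, then for all t ∈ [t_k, t_k + s_#] with s_# := (c_Γ − 1)·c₁/(2·c_Γ·C), one has Γ(t) − V(t) ≥ (c_Γ − 1)·c₁/(2·c_Γ) > 0. -/
noncomputable section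

open Set

theorem sub_le_image_of_neg_le_deriv {f : ℝ → ℝ} {a b C δ : ℝ} (hC : 0 < C) (hab : a ≤ b)
    (hb : b ≤ a + δ / C) (hf : ContinuousOn f (Icc a b)) (hf' : DifferentiableOn ℝ f (Ioo a b))
    (hderiv : ∀ t ∈ Ioo a b, -C ≤ deriv f t) : f a - δ ≤ f b := by
  rw [← interior_Icc] at hf' hderiv
  have hdecay : -C * (b - a) ≤ f b - f a :=
    (convex_Icc a b).mul_sub_le_image_sub_of_le_deriv hf hf' hderiv
      a (left_mem_Icc.2 hab) b (right_mem_Icc.2 hab) hab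
  have hloss : (b - a) * C ≤ δ := (le_div_iff₀ hC).1 (sub_le_iff_le_add'.2 hb)
  linarith

theorem sub_one_mul_div_le_sub_of_mul_le {K : Type*} [Field K] [LinearOrder K]
    [IsStrictOrderedRing K] {c m x y : K} (hc : 1 ≤ c) (hm : m ≤ x) (hxy : c * y ≤ x) :
    (c - 1) * m / c ≤ x - y := by
  rw [div_le_iff₀ (zero_lt_one.trans_le hc)]
  calc
    (c - 1) * m ≤ (c - 1) * x := mul_le_mul_of_nonneg_left hm (sub_nonneg.2 hc)
    _ = x * c - x := by ring
    _ ≤ x * c - c * y := sub_le_sub_left hxy _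
    _ = (x - y) * c := by ring

theorem robust_margin_persists_general {tk t C c₁ cΓ : ℝ}
    (hC : 0 < C) (hc₁ : 0 < c₁) (hcΓ : 1 < cΓ) {V Γ : ℝ → ℝ}
    (ht : t ∈ Icc tk (tk + (cΓ - 1) * c₁ / (2 * cΓ * C)))
    (hcont : ContinuousOn (fun s => Γ s - V s) (Icc tk t))
    (hdiff : DifferentiableOn ℝ (fun s => Γ s - V s) (Ioo tk t))
    (hder : ∀ s ∈ Ioo tk t, -C ≤ deriv (fun s => Γ s - V s) s)
    (hΓtk : c₁ ≤ Γ tk) (htrig : 0 ≤ Γ tk - cΓ * V tk) :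
    (cΓ - 1) * c₁ / (2 * cΓ) ≤ Γ t - V t ∧ 0 < (cΓ - 1) * c₁ / (2 * cΓ) := by
  have hinit : (cΓ - 1) * c₁ / cΓ ≤ Γ tk - V tk :=
    sub_one_mul_div_le_sub_of_mul_le hcΓ.le hΓtk (sub_nonneg.1 htrig)
  have hfinal : Γ tk - V tk - (cΓ - 1) * c₁ / (2 * cΓ) ≤ Γ t - V t :=
    sub_le_image_of_neg_le_deriv hC ht.1 (by simpa only [div_div] using ht.2) hcont hdiff hder
  have hpos : 0 < (cΓ - 1) * c₁ / (2 * cΓ) :=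
    div_pos (mul_pos (sub_pos.2 hcΓ) hc₁) (by linarith)
  refine ⟨?_, hpos⟩
  -- The sampling interval is the time needed to lose half of the initial margin at rate `C`.
  calc
    (cΓ - 1) * c₁ / (2 * cΓ) = (cΓ - 1) * c₁ / cΓ - (cΓ - 1) * c₁ / (2 * cΓ) := by
      field_simp
      norm_num
    _ ≤ Γ tk - V tk - (cΓ - 1) * c₁ / (2 * cΓ) := sub_le_sub_right hinit _
    _ ≤ Γ t - V t := hfinal

/-- Robust safety margin persists over one sampling interval: if
`(Γ − V)' ≥ −C`, `Γ ≥ c₁` on `[t_k,∞)`, and `Γ(t_k) − c_Γ·V(t_k) ≥ 0` with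
`c_Γ > 1`, then for all `t ∈ [t_k, t_k + s_#]` with
`s_# = (c_Γ − 1)·c₁/(2·c_Γ·C)`, one has
`Γ(t) − V(t) ≥ (c_Γ − 1)·c₁/(2·c_Γ) > 0`. -/
theorem robust_margin_persists (tk C c₁ cΓ : ℝ)
    (hC : 0 < C) (hc₁ : 0 < c₁) (hcΓ : 1 < cΓ)
    (V Γ : ℝ → ℝ)
    (hVd : ∀ t, tk ≤ t → DifferentiableAt ℝ V t)
    (hΓd : ∀ t, tk ≤ t → DifferentiableAt ℝ Γ t)
    (hder : ∀ t, tk ≤ t → -C ≤ deriv (fun s => Γ s - V s) t)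
    (hΓlb : ∀ t, tk ≤ t → c₁ ≤ Γ t)
    (htrig : 0 ≤ Γ tk - cΓ * V tk) :
    ∀ t ∈ Set.Icc tk (tk + (cΓ - 1) * c₁ / (2 * cΓ * C)),
      (cΓ - 1) * c₁ / (2 * cΓ) ≤ Γ t - V t ∧ 0 < (cΓ - 1) * c₁ / (2 * cΓ) := by
  have hdiff : ∀ s, tk ≤ s → DifferentiableAt ℝ (fun s => Γ s - V s) s :=
    fun s hs => (hΓd s hs).fun_sub (hVd s hs)
  exact fun t ht => robust_margin_persists_general hC hc₁ hcΓ ht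
    (fun s hs => (hdiff s hs.1).continuousAt.continuousWithinAt)
    (fun s hs => (hdiff s hs.1.le).differentiableWithinAt)
    (fun s hs => hder s hs.1.le) (hΓlb tk le_rfl) htrig
end
end
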